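/- Let 𝒞 be a category and let C be an object equipped with a binary product cone (p₁, p₂ : C → C) exhibiting C as the product of C with C, and let α : C → C be the unique morphism satisfying p₁ ∘ α = p₁ ∘ p₁, p₁ ∘ p₂ ∘ α = p₂ ∘ p₁, and p₂ ∘ α = p₂ ∘ p₂. If α = id_C, then p₁ = id_C. -/

import Mathlib

open CategoryTheory CategoryTheory.Limits

universe u v

theorem isSplitEpi_fst_of_isLimit {𝒞 : Type u} [Category.{v} 𝒞] {X Y : 𝒞} {s : BinaryFan X Y}
    (hs : IsLimit s) (f : X ⟶ Y) : IsSplitEpi s.fst :=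
  .mk' ⟨BinaryFan.IsLimit.lift hs (𝟙 X) f, BinaryFan.IsLimit.lift_fst hs (𝟙 X) f⟩

theorem stmt1_general {𝒞 : Type u} [Category.{v} 𝒞] {C : 𝒞} (p₁ α : C ⟶ C) [Epi p₁]
    (h₁ : α ≫ p₁ = p₁ ≫ p₁) (hα : α = 𝟙 C) : p₁ = 𝟙 C := by
  have idem : p₁ ≫ p₁ = p₁ := by rw [← h₁, hα, Category.id_comp]
  exact (cancel_epi_id p₁).mp idem

/-- If the associator component `α` built from the single cone
`(p₁, p₂ : C ⟶ C)` is the identity, then `p₁ = 𝟙 C`. -/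
theorem stmt1 {𝒞 : Type u} [Category.{v} 𝒞] (C : 𝒞) (p₁ p₂ : C ⟶ C)
    (hlim : IsLimit (BinaryFan.mk p₁ p₂))
    (α : C ⟶ C)
    (h₁ : α ≫ p₁ = p₁ ≫ p₁)
    (h₂ : α ≫ p₂ ≫ p₁ = p₁ ≫ p₂)
    (h₃ : α ≫ p₂ = p₂ ≫ p₂)
    (hα : α = 𝟙 C) :
    p₁ = 𝟙 C := by
  have : IsSplitEpi p₁ := isSplitEpi_fst_of_isLimit hlim (𝟙 C)
  exact stmt1_general p₁ α h₁ hα
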